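/- Let δ₁ > 0, β₁ > 0, σ > 0, t' > 0 and 0 ≤ σ̲² < σ̄², and let G(b) := (1/2)(σ̄²·b⁺ − σ̲²·b⁻) where b⁺ = max(b,0) and b⁻ = max(−b,0). Define u : [0,t'] × ℝ → ℝ by u(t,x) = δ₁²/β₁² + δ₁σ²σ̄²/(2β₁²) + e^{−β₁(t'−t)}·((σ²σ̄² + 2δ₁)/β₁)·(x − δ₁/β₁) + e^{−2β₁(t'−t)}·[ (x − δ₁/β₁)² + (σ²σ̄²/(2β₁))·(δ₁/β₁ − 2x) ]. Then for all t ∈ [0,t'] and all x ≥ 0, u satisfies the fully nonlinear PDE ∂_t u(t,x) + (δ₁ − β₁ x)·∂_x u(t,x) + 2·G( (σ² x / 2)·∂²_x u(t,x) ) = 0, with terminal condition u(t', x) = x². -/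

import Mathlib

open MeasureTheory Filter Topology

/-!
For a function `p t * x ^ 2 + q t * x + r t` with `p ≥ 0`, the argument of `G` is nonnegative on
`x ≥ 0`, where `G` is the linear map `b ↦ σ̄² b / 2`. Matching powers of `x` reduces the equation
to the triangular system
`p' = 2 β p`, `q' = β q - κ p`, `r' = -δ q` with `κ = σ² σ̄² + 2 δ`.
If `E' = β E`, it is solved by
`p = E²`, `q = (κ / β) (E - E²)`, `r = (δ κ / (2 β²)) (1 - E)²`,
and these take the values `1, 0, 0` where `E = 1`. The given `u` is the case
`E t = exp (-β (t' - t))`.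
-/

theorem half_mul_max_sub_max_neg_of_nonneg {b : ℝ} (m M : ℝ) (hb : 0 ≤ b) :
    1 / 2 * (M * max b 0 - m * max (-b) 0) = M / 2 * b := by
  rw [max_eq_left hb, max_eq_right (neg_nonpos.mpr hb)]
  ring

section Quadratic

variable {𝕜 : Type*} [NontriviallyNormedField 𝕜]

theorem deriv_quadratic (a b c : 𝕜) :
    deriv (fun x => a * x ^ 2 + b * x + c) = fun x => 2 * a * x + b := by
  funext x
  have h := (((hasDerivAt_pow 2 x).const_mul a).fun_add
    ((hasDerivAt_id' x).const_mul b)).add_const c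
  refine (h.congr_deriv ?_).deriv
  push_cast
  ring

theorem deriv_deriv_quadratic (a b c : 𝕜) :
    deriv (deriv fun x => a * x ^ 2 + b * x + c) = fun _ => 2 * a := by
  funext x
  rw [deriv_quadratic]
  simpa only [mul_one] using (((hasDerivAt_id' x).const_mul (2 * a)).add_const b).deriv

end Quadratic

theorem quadratic_solves_pde_of_hasDerivAt {p q r G : ℝ → ℝ} {δ β c M t x : ℝ}
    (hG : ∀ b, 0 ≤ b → G b = M / 2 * b) (hc : 0 ≤ c) (hx : 0 ≤ x) (hpt : 0 ≤ p t)
    (hp : HasDerivAt p (2 * β * p t) t)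
    (hq : HasDerivAt q (β * q t - (c * M + 2 * δ) * p t) t)
    (hr : HasDerivAt r (-δ * q t) t) :
    deriv (fun s => p s * x ^ 2 + q s * x + r s) t
      + (δ - β * x) * deriv (fun y => p t * y ^ 2 + q t * y + r t) x
      + 2 * G (c * x / 2 * deriv (deriv fun y => p t * y ^ 2 + q t * y + r t) x) = 0 := by
  have h_time := (((hp.mul_const (x ^ 2)).fun_add (hq.mul_const x)).fun_add hr).deriv
  have h_arg : 0 ≤ c * x / 2 * (2 * p t) := by positivity
  rw [h_time, deriv_deriv_quadratic, deriv_quadratic, hG _ h_arg]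
  ring

section Coefficients

variable {𝕜 : Type*} [NontriviallyNormedField 𝕜] {E : 𝕜 → 𝕜} {β t : 𝕜}

theorem hasDerivAt_sq_of_deriv_eq_mul (hE : HasDerivAt E (β * E t) t) :
    HasDerivAt (fun s => E s ^ 2) (2 * β * E t ^ 2) t := by
  refine (hE.fun_pow 2).congr_deriv ?_
  push_cast
  ring

theorem hasDerivAt_linearCoeff (κ : 𝕜) (hβ : β ≠ 0) (hE : HasDerivAt E (β * E t) t) :
    HasDerivAt (fun s => κ / β * (E s - E s ^ 2))
      (β * (κ / β * (E t - E t ^ 2)) - κ * E t ^ 2) t := by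
  refine ((hE.fun_sub (hasDerivAt_sq_of_deriv_eq_mul hE)).const_mul (κ / β)).congr_deriv ?_
  field_simp
  ring

theorem hasDerivAt_constCoeff [NeZero (2 : 𝕜)] (δ κ : 𝕜) (hE : HasDerivAt E (β * E t) t) :
    HasDerivAt (fun s => δ * κ / (2 * β ^ 2) * (1 - E s) ^ 2)
      (-δ * (κ / β * (E t - E t ^ 2))) t := by
  refine (((hE.const_sub 1).fun_pow 2).const_mul (δ * κ / (2 * β ^ 2))).congr_deriv ?_
  push_cast
  field_simp

end Coefficients

theorem hasDerivAt_exp_neg_mul_sub (β T t : ℝ) :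
    HasDerivAt (fun s => Real.exp (-β * (T - s))) (β * Real.exp (-β * (T - t))) t := by
  refine (((hasDerivAt_id' t).const_sub T).const_mul (-β)).exp.congr_deriv ?_
  ring

theorem centered_form_eq_quadratic {𝕜 : Type*} [Field 𝕜] [NeZero (2 : 𝕜)] {β : 𝕜} (hβ : β ≠ 0)
    (δ c M E x : 𝕜) :
    δ ^ 2 / β ^ 2 + δ * c * M / (2 * β ^ 2) + E * ((c * M + 2 * δ) / β) * (x - δ / β)
        + E ^ 2 * ((x - δ / β) ^ 2 + c * M / (2 * β) * (δ / β - 2 * x)) =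
      E ^ 2 * x ^ 2 + (c * M + 2 * δ) / β * (E - E ^ 2) * x
        + δ * (c * M + 2 * δ) / (2 * β ^ 2) * (1 - E) ^ 2 := by
  field_simp
  ring

theorem stmt_11_general (δ β σ T M : ℝ) (hβ : β ≠ 0)
    (G : ℝ → ℝ) (hG : ∀ b, 0 ≤ b → G b = M / 2 * b)
    (u : ℝ → ℝ → ℝ)
    (hu : ∀ t x, u t x =
      δ ^ 2 / β ^ 2 + δ * σ ^ 2 * M / (2 * β ^ 2)
      + Real.exp (-β * (T - t)) * ((σ ^ 2 * M + 2 * δ) / β) * (x - δ / β)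
      + Real.exp (-2 * β * (T - t)) *
          ((x - δ / β) ^ 2 + (σ ^ 2 * M / (2 * β)) * (δ / β - 2 * x))) :
    (∀ x, u T x = x ^ 2) ∧
    (∀ t x : ℝ, 0 ≤ x →
      deriv (fun s => u s x) t + (δ - β * x) * deriv (u t) x
        + 2 * G ((σ ^ 2 * x / 2) * deriv (deriv (u t)) x) = 0) := by
  let E : ℝ → ℝ := fun t => Real.exp (-β * (T - t))
  let κ := σ ^ 2 * M + 2 * δ
  have hE_sq (t : ℝ) : Real.exp (-2 * β * (T - t)) = E t ^ 2 := by
    rw [← Real.exp_nat_mul]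
    congr 1
    push_cast
    ring
  have hu_quadratic : u = fun t x => E t ^ 2 * x ^ 2 + κ / β * (E t - E t ^ 2) * x
      + δ * κ / (2 * β ^ 2) * (1 - E t) ^ 2 := by
    funext t x
    rw [hu, hE_sq, centered_form_eq_quadratic hβ]
  have hE_terminal : E T = 1 := by simp [E]
  subst hu_quadratic
  refine ⟨fun x => by simp [hE_terminal], fun t x hx => ?_⟩
  have hE : HasDerivAt E (β * E t) t := hasDerivAt_exp_neg_mul_sub β T t
  exact quadratic_solves_pde_of_hasDerivAt hG (sq_nonneg σ) hx (sq_nonneg (E t))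
    (hasDerivAt_sq_of_deriv_eq_mul hE) (hasDerivAt_linearCoeff κ hβ hE)
    (hasDerivAt_constCoeff δ κ hE)

/-- with `a² = σ̄²` (here `sb`), the explicit function `u` solves the
fully nonlinear PDE `∂_t u + (δ₁ - β₁ x) ∂_x u + 2 G((σ²x/2) ∂²_x u) = 0` on
`[0,t'] × [0,∞)` with terminal value `x²`, where `G(b) = (σ̄² b⁺ - σ̲² b⁻)/2`. -/
theorem stmt_11 (δ₁ β₁ σ t' sl sb : ℝ)
    (hδ : 0 < δ₁) (hβ : 0 < β₁) (hσ : 0 < σ) (ht' : 0 < t')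
    (hsl : 0 ≤ sl) (hslb : sl < sb)
    (G : ℝ → ℝ)
    (hG : ∀ b : ℝ, G b = (1 / 2) * (sb * max b 0 - sl * max (-b) 0))
    (u : ℝ → ℝ → ℝ)
    (hu : ∀ t x, u t x =
      δ₁ ^ 2 / β₁ ^ 2 + δ₁ * σ ^ 2 * sb / (2 * β₁ ^ 2)
      + Real.exp (-β₁ * (t' - t)) * ((σ ^ 2 * sb + 2 * δ₁) / β₁) * (x - δ₁ / β₁)
      + Real.exp (-2 * β₁ * (t' - t)) *
          ((x - δ₁ / β₁) ^ 2 + (σ ^ 2 * sb / (2 * β₁)) * (δ₁ / β₁ - 2 * x))) :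
    (∀ x, u t' x = x ^ 2) ∧
    (∀ t ∈ Set.Icc (0 : ℝ) t', ∀ x : ℝ, 0 ≤ x →
      deriv (fun s => u s x) t + (δ₁ - β₁ * x) * deriv (u t) x
        + 2 * G ((σ ^ 2 * x / 2) * deriv (deriv (u t)) x) = 0) := by
  have hG_nonneg (b : ℝ) (hb : 0 ≤ b) : G b = sb / 2 * b :=
    (hG b).trans (half_mul_max_sub_max_neg_of_nonneg sl sb hb)
  have h := stmt_11_general δ₁ β₁ σ t' sb hβ.ne' G hG_nonneg u hu
  exact ⟨h.1, fun t _ => h.2 t⟩
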